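/- Let 𝓕 be a nonprincipal ultrafilter on ℕ, let (V n) be a family of nonempty finite sets with |V n| → ∞ along 𝓕, and for some n ≥ 2 let E m ⊆ (V m)^n be symmetric relations (invariant under permutations of coordinates). Assume the partitioned relation E(x₁; x₂,…,xₙ) is stable on the ultraproduct: for some k ∈ ℕ there do not exist germs a¹,…,a^k in ∏ V m / 𝓕 and (n−1)-tuples of germs b̄¹,…,b̄^k such that (aⁱ, b̄ʲ) satisfies E if and only if i ≤ j. Then there exist nonempty finite subsets A m ⊆ V m with δ(A) > 0 such that either every n-tuple of pairwise distinct germs from ∏ A m / 𝓕 satisfies E, or no n-tuple of pairwise distinct germs from ∏ A m / 𝓕 satisfies E. -/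

import Mathlib

open Filter

/-- The family `A` of nonempty finite subsets `A n ⊆ V n` has dimension `l` along the
ultrafilter `𝓕`: the sequence `log |A n| / log |V n|` converges to `l` along `𝓕`. -/
def hasDim (𝓕 : Ultrafilter ℕ) {V : ℕ → Type} [∀ n, Fintype (V n)]
    (A : ∀ n, Set (V n)) (l : ℝ) : Prop :=
  Tendsto (fun n => Real.log ((A n).ncard) / Real.log (Fintype.card (V n)))
    (𝓕 : Filter ℕ) (nhds l)

/-- Given `a : V` and an `(n-1)`-tuple `b`, form the `n`-tuple `(a, b₁, …, b_{n-1})`. -/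
def extendTuple {V : Type*} {n : ℕ} (a : V) (b : Fin (n - 1) → V) : Fin n → V :=
  fun t => if h : (t : ℕ) = 0 then a else b ⟨(t : ℕ) - 1, by have := t.isLt; omega⟩

/-!
A relation without the order property has bounded Littlestone dimension, since a deep tree contains
a long ladder. Hence splitting a large set again and again by instances of `E` stops after boundedly
many steps, at a good subset `A₀`: every `(n - 1)`-tuple is related by `E` either to almost all or
to almost no elements of `A₀`. Being related to almost all elements of `A₀` is a symmetric
`(n - 1)`-ary relation that inherits stability from `E`, so by induction on `n` it has a large
clique or independent set inside `A₀`, out of which a clique or independent set of `E` is chosen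
greedily. Each step replaces a set of size `N` by one of size at least a fixed power of `N`, so
the final set has positive dimension. By Łoś's theorem, both stability and homogeneity pass between
the ultraproduct and its factors.
-/

namespace ErdosHajnal

/-! ### Stable relations -/

section Relations

variable {α β : Type*} {R : α → β → Prop}

/-- The `k`-order property of `R`: the relation `R` orders some `a₁, …, a_k` and `b₁, …, b_k`
like `≤`. A relation is stable if this fails for some `k`. -/
def HasOrderProperty (R : α → β → Prop) (k : ℕ) : Prop :=
  ∃ (a : Fin k → α) (b : Fin k → β), ∀ i j, R (a i) (b j) ↔ i ≤ j

/-- There is a complete binary tree of depth `d` with nodes labelled by elements of `B`, each of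
whose branches is realised in `A`; that is, the Littlestone dimension (Shelah's 2-rank) of `R` on
`A × B` is at least `d`. -/
def LittlestoneTree (R : α → β → Prop) : ℕ → Set α → Set β → Prop
  | 0, A, _ => A.Nonempty
  | d + 1, A, B => ∃ b ∈ B, LittlestoneTree R d {a ∈ A | R a b} B ∧
      LittlestoneTree R d {a ∈ A | ¬ R a b} B

namespace LittlestoneTree

theorem mono_left {d : ℕ} {A A' : Set α} {B : Set β} (hA : A ⊆ A')
    (h : LittlestoneTree R d A B) : LittlestoneTree R d A' B := by
  induction d generalizing A A' with
  | zero => exact h.mono hA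
  | succ d ih =>
    obtain ⟨b, hb, hpos, hneg⟩ := h
    exact ⟨b, hb, ih (fun a ha => ⟨hA ha.1, ha.2⟩) hpos, ih (fun a ha => ⟨hA ha.1, ha.2⟩) hneg⟩

theorem nonempty {d : ℕ} {A : Set α} {B : Set β} (h : LittlestoneTree R d A B) : A.Nonempty := by
  induction d generalizing A with
  | zero => exact h
  | succ d ih =>
    obtain ⟨b, -, hpos, -⟩ := h
    exact (ih hpos).mono fun _ ha => ha.1

/-- A Ramsey property of trees: colouring the nodes with two colours leaves a large monochromatic
subtree. -/
theorem of_subset_union {p q : ℕ} {A : Set α} {B B₁ B₂ : Set β} (hB : B ⊆ B₁ ∪ B₂)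
    (h : LittlestoneTree R (p + q) A B) :
    LittlestoneTree R p A B₁ ∨ LittlestoneTree R q A B₂ := by
  induction hd : p + q generalizing p q A with
  | zero =>
    obtain ⟨rfl, rfl⟩ : p = 0 ∧ q = 0 := by omega
    exact Or.inl h
  | succ d ih =>
    rcases p with _ | p
    · exact Or.inl h.nonempty
    rcases q with _ | q
    · exact Or.inr h.nonempty
    rw [hd] at h
    obtain ⟨b, hb, hpos, hneg⟩ := h
    have left_or_right {p' q' : ℕ} (hpq : p' + q' = d) :=
      And.intro (ih (hpq ▸ hpos) hpq) (ih (hpq ▸ hneg) hpq)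
    rcases hB hb with hb₁ | hb₂
    · rcases left_or_right (p' := p) (q' := q + 1) (by omega) with ⟨hpos | hpos, hneg | hneg⟩
      · exact Or.inl ⟨b, hb₁, hpos, hneg⟩
      all_goals exact Or.inr (mono_left (Set.sep_subset _ _) ‹LittlestoneTree R (q + 1) _ B₂›)
    · rcases left_or_right (p' := p + 1) (q' := q) (by omega) with ⟨hpos | hpos, hneg | hneg⟩
      case inr.inr => exact Or.inr ⟨b, hb₂, hpos, hneg⟩
      all_goals exact Or.inl (mono_left (Set.sep_subset _ _) ‹LittlestoneTree R (p + 1) _ B₁›)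

/-- The ladder has one `a` more than `b`s, so that it can be lengthened at either end. -/
theorem exists_ladder {k : ℕ} {A : Set α} {B : Set β}
    (h : LittlestoneTree R (2 ^ (k + 1) - 2) A B) :
    ∃ (a : Fin (k + 1) → α) (b : Fin k → β), (∀ i, a i ∈ A) ∧ (∀ j, b j ∈ B) ∧
      ∀ i j, R (a i) (b j) ↔ i ≤ j.castSucc := by
  induction k generalizing A B with
  | zero =>
    obtain ⟨x, hx⟩ := h.nonempty
    exact ⟨fun _ => x, Fin.elim0, fun _ => hx, fun j => j.elim0, fun _ j => j.elim0⟩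
  | succ k ih =>
    obtain ⟨x, hx⟩ := h.nonempty
    have hdepth : 2 ^ (k + 1 + 1) - 2 = (2 ^ (k + 1) - 2 + 1) + (2 ^ (k + 1) - 2 + 1) := by
      have := Nat.one_lt_two_pow (n := k + 1) (by omega)
      omega
    have hB : B ⊆ {b ∈ B | R x b} ∪ {b ∈ B | ¬ R x b} := fun b hb =>
      (em (R x b)).imp (⟨hb, ·⟩) (⟨hb, ·⟩)
    rcases of_subset_union hB (hdepth ▸ h) with ⟨y, hy, -, hneg⟩ | ⟨y, hy, hpos, -⟩
    · obtain ⟨a, b, ha, hb, hab⟩ := ih hneg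
      refine ⟨Fin.cons x a, Fin.cons y b, ?_, ?_, ?_⟩
      · simpa [Fin.forall_fin_succ, hx] using fun i => (ha i).1
      · simpa [Fin.forall_fin_succ, hy.1] using fun j => (hb j).1
      · simp [Fin.forall_fin_succ, hy.2, (hb _).2, (ha _).2, hab]
    · obtain ⟨a, b, ha, hb, hab⟩ := ih hpos
      refine ⟨Fin.snoc a x, Fin.snoc b y, ?_, ?_, ?_⟩
      · simpa [Fin.forall_fin_succ', hx] using fun i => (ha i).1
      · simpa [Fin.forall_fin_succ', hy.1] using fun j => (hb j).1
      · simp [Fin.forall_fin_succ', hy.2, (hb _).2, (ha _).2, hab, Fin.le_last]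

theorem hasOrderProperty {k : ℕ} {A : Set α} {B : Set β}
    (h : LittlestoneTree R (2 ^ (k + 1) - 2) A B) : HasOrderProperty R k := by
  obtain ⟨a, b, -, -, hab⟩ := h.exists_ladder
  exact ⟨fun i => a i.castSucc, b, fun i j => hab i.castSucc j⟩

end LittlestoneTree

open Classical in
/-- The elements of `β` to which all but fewer than `s` elements of `A` are related. On a good set
this is a finite version of the trace of the definition of a generic type. -/
def mostly (R : α → β → Prop) (A : Finset α) (s : ℕ) : Set β :=
  {b | (A.filter fun a => ¬ R a b).card < s}

/-- `A` is good for `R` with error `s` if every `b` is related either to all but fewer than `s`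
elements of `A` or to fewer than `s` elements of `A`; compare the `ε`-good sets in the
Malliaris–Shelah stable regularity lemma. -/
def IsGood (R : α → β → Prop) (s : ℕ) (A : Finset α) : Prop :=
  ∀ b, b ∈ mostly R A s ∨ b ∈ mostly (fun a b => ¬ R a b) A s

open Classical in
theorem mem_mostly {A : Finset α} {s : ℕ} {b : β} :
    b ∈ mostly R A s ↔ (A.filter fun a => ¬ R a b).card < s :=
  Iff.rfl

theorem mem_mostly_congr {γ : Type*} {Q : α → γ → Prop} {A : Finset α} {s : ℕ} {b : β} {c : γ}
    (h : ∀ a ∈ A, R a b ↔ Q a c) : b ∈ mostly R A s ↔ c ∈ mostly Q A s := by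
  classical
  rw [mem_mostly, mem_mostly, Finset.filter_congr fun a ha => not_congr (h a ha)]

theorem mostly_anti {A A' : Finset α} (h : A ⊆ A') (s : ℕ) : mostly R A' s ⊆ mostly R A s := by
  classical
  exact fun b hb => (Finset.card_le_card (Finset.filter_subset_filter _ h)).trans_lt hb

theorem IsGood.mem_mostly_iff {s : ℕ} {A : Finset α} (h : IsGood R s A) (b : β) :
    b ∈ mostly (fun a b => R a b ↔ b ∈ mostly R A s) A s := by
  by_cases hb : b ∈ mostly R A s
  · exact (mem_mostly_congr fun _ _ => (iff_true_right hb).symm).1 hb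
  · exact (mem_mostly_congr (R := fun a b => ¬ R a b) fun _ _ => (iff_false_right hb).symm).1
      ((h b).resolve_left hb)

theorem exists_forall_of_subset_mostly {A : Finset α} {s : ℕ} {T : Finset β}
    (hT : (T : Set β) ⊆ mostly R A s) (hA : T.card * s < A.card) : ∃ a ∈ A, ∀ b ∈ T, R a b := by
  classical
  have hcard : (T.biUnion fun b => A.filter fun a => ¬ R a b).card ≤ T.card * s :=
    Finset.card_biUnion_le_card_mul _ _ _ fun b hb => (hT hb).le
  obtain ⟨a, ha, hbad⟩ := Finset.exists_mem_notMem_of_card_lt_card (hcard.trans_lt hA)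
  exact ⟨a, ha, fun b hb => by
    by_contra hab
    exact hbad (Finset.mem_biUnion.2 ⟨b, hb, Finset.mem_filter.2 ⟨ha, hab⟩⟩)⟩

/-- If no subset were good, splitting repeatedly would produce a tree of depth `N`. -/
theorem exists_isGood (t : ℕ → ℕ) (ht : 0 < t 0) {N : ℕ} {A : Finset α}
    (hA : t N ≤ A.card) (hN : ¬ LittlestoneTree R N A Set.univ) :
    ∃ i, ∃ A₀ ⊆ A, t (i + 1) ≤ A₀.card ∧ IsGood R (t i) A₀ := by
  classical
  induction N generalizing A with
  | zero => exact absurd (Finset.card_pos.1 (ht.trans_le hA)) hN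
  | succ N ih =>
    by_cases hgood : IsGood R (t N) A
    · exact ⟨N, A, subset_rfl, hA, hgood⟩
    simp only [IsGood, mem_mostly, not_not, not_forall, not_or, not_lt] at hgood
    obtain ⟨b, hneg, hpos⟩ := hgood
    have hsplit : ¬ LittlestoneTree R N (A.filter fun a => R a b : Finset α) Set.univ ∨
        ¬ LittlestoneTree R N (A.filter fun a => ¬ R a b : Finset α) Set.univ := by
      rw [← not_and_or]
      rintro ⟨hpos, hneg⟩
      exact hN ⟨b, trivial, by simpa using hpos, by simpa using hneg⟩
    rcases hsplit with htree | htree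
    · obtain ⟨i, A₀, hA₀, h⟩ := ih hpos htree
      exact ⟨i, A₀, hA₀.trans (Finset.filter_subset _ _), h⟩
    · obtain ⟨i, A₀, hA₀, h⟩ := ih hneg htree
      exact ⟨i, A₀, hA₀.trans (Finset.filter_subset _ _), h⟩

end Relations

/-! ### Symmetric hypergraphs -/

section Hypergraphs

variable {α : Type*} {n : ℕ}

/-- A set of `n`-tuples, viewed as an `n`-ary relation, is symmetric. -/
def PermInvariant (E : Set (Fin n → α)) : Prop :=
  ∀ (σ : Equiv.Perm (Fin n)) (x : Fin n → α), x ∈ E → x ∘ σ ∈ E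

/-- The partitioned relation `E(x₁; x₂, …, xₙ)`. -/
def partitioned (E : Set (Fin (n + 1) → α)) (a : α) (y : Fin n → α) : Prop :=
  (Fin.cons a y : Fin (n + 1) → α) ∈ E

/-- `H` is a clique of the hypergraph `E`: the relation `E` holds on all tuples of distinct
elements of `H`. An independent set is a clique of `Eᶜ`. -/
def IsClique (E : Set (Fin n → α)) (H : Set α) : Prop :=
  ∀ x : Fin n → α, x.Injective → (∀ i, x i ∈ H) → x ∈ E

theorem IsClique.mono_left {E E' : Set (Fin n → α)} {H : Set α} (hE : E ⊆ E')
    (h : IsClique E H) : IsClique E' H :=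
  fun x hx hxH => hE (h x hx hxH)

namespace PermInvariant

theorem comp_perm_mem_iff {E : Set (Fin n → α)} (hE : PermInvariant E) (σ : Equiv.Perm (Fin n))
    (x : Fin n → α) : x ∘ σ ∈ E ↔ x ∈ E := by
  refine ⟨fun h => ?_, hE σ x⟩
  simpa [Function.comp_assoc] using hE σ⁻¹ _ h

theorem compl {E : Set (Fin n → α)} (hE : PermInvariant E) : PermInvariant Eᶜ :=
  fun σ x hx => mt (hE.comp_perm_mem_iff σ x).1 hx

theorem partitioned_comp_perm_iff {E : Set (Fin (n + 1) → α)} (hE : PermInvariant E) (a : α)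
    (σ : Equiv.Perm (Fin n)) (y : Fin n → α) :
    partitioned E a (y ∘ σ) ↔ partitioned E a y := by
  have hcons : (Fin.cons a (y ∘ σ) : Fin (n + 1) → α) =
      Fin.cons a y ∘ Equiv.Perm.decomposeFin.symm (0, σ) := by
    funext i
    cases i using Fin.cases <;> simp
  rw [partitioned, hcons, hE.comp_perm_mem_iff, partitioned]

theorem partitioned_cons_comm {E : Set (Fin (n + 2) → α)} (hE : PermInvariant E) (a b : α)
    (y : Fin n → α) :
    partitioned E a (Fin.cons b y) ↔ partitioned E b (Fin.cons a y) := by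
  have hswap : (Fin.cons b (Fin.cons a y) : Fin (n + 2) → α) =
      Fin.cons a (Fin.cons b y) ∘ Equiv.swap 0 1 := by
    funext i
    cases i using Fin.cases with
    | zero => simp
    | succ i =>
      cases i using Fin.cases with
      | zero => simp
      | succ i =>
        rw [Function.comp_apply, Equiv.swap_apply_of_ne_of_ne (Fin.succ_ne_zero _)
          (Fin.succ_succ_ne_one i)]
        simp
  rw [partitioned, partitioned, hswap, hE.comp_perm_mem_iff]

theorem mostly {E : Set (Fin (n + 1) → α)} (hE : PermInvariant E) (A : Finset α) (s : ℕ) :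
    PermInvariant (mostly (partitioned E) A s) :=
  fun σ y => (mem_mostly_congr fun a _ => hE.partitioned_comp_perm_iff a σ y).2

end PermInvariant

theorem HasOrderProperty.of_mostly {E : Set (Fin (n + 2) → α)} (hE : PermInvariant E)
    {A : Finset α} {s k : ℕ} (hA : IsGood (partitioned E) s A) (hcard : k * k * s < A.card)
    (h : HasOrderProperty (partitioned (mostly (partitioned E) A s)) k) :
    HasOrderProperty (partitioned E) k := by
  classical
  obtain ⟨a, b, hab⟩ := h
  let T : Finset (Fin (n + 1) → α) := Finset.univ.image fun p : Fin k × Fin k =>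
    Fin.cons (a p.1) (b p.2)
  have hT : T.card ≤ k * k := Finset.card_image_le.trans (by simp)
  obtain ⟨x, -, hx⟩ := exists_forall_of_subset_mostly (fun y _ => hA.mem_mostly_iff y)
    ((Nat.mul_le_mul_right s hT).trans_lt hcard)
  refine ⟨a, fun j => Fin.cons x (b j), fun i j => ?_⟩
  rw [hE.partitioned_cons_comm, hx _ (Finset.mem_image_of_mem _ (Finset.mem_univ (i, j)))]
  exact hab i j

theorem IsClique.insert_vertex {E : Set (Fin (n + 1) → α)} (hE : PermInvariant E) {H : Set α}
    {a : α} (hH : IsClique E H) (ha : IsClique {y | partitioned E a y} H) :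
    IsClique E (insert a H) := by
  intro x hx hxH
  by_cases hax : ∃ i, x i = a
  · obtain ⟨i, rfl⟩ := hax
    rw [← hE.comp_perm_mem_iff (Equiv.swap 0 i), ← Fin.cons_self_tail (x ∘ Equiv.swap 0 i)]
    have hinj := hx.comp (Equiv.swap 0 i).injective
    have hhead : (x ∘ Equiv.swap 0 i) 0 = x i := by simp
    rw [hhead]
    refine ha _ (hinj.comp (Fin.succ_injective n)) fun j => (hxH _).resolve_left ?_
    exact fun hj => Fin.succ_ne_zero j (hinj (hj.trans hhead.symm))
  · exact hH x hx fun i => (hxH i).resolve_left fun hi => hax ⟨i, hi⟩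

/-- A greedy choice: each new element avoids fewer than `s` bad elements for every tuple of elements
chosen before. -/
theorem IsClique.exists_of_mostly {E : Set (Fin (n + 1) → α)} (hE : PermInvariant E)
    {A B : Finset α} (hBA : B ⊆ A) {s h : ℕ}
    (hB : IsClique (mostly (partitioned E) A s) (B : Set α)) (hcard : h + h ^ n * s ≤ B.card) :
    ∃ H ⊆ B, H.card = h ∧ IsClique E (H : Set α) := by
  classical
  induction h with
  | zero => exact ⟨∅, by simp, rfl, fun x _ hx => absurd (hx 0) (by simp)⟩
  | succ h ih =>
    have hpow : h ^ n * s ≤ (h + 1) ^ n * s := by gcongr; omega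
    obtain ⟨H, hHB, rfl, hH⟩ := ih (by omega)
    let T := (Fintype.piFinset fun _ : Fin n => H).filter Function.Injective
    have hT : T.card ≤ H.card ^ n := (Finset.card_filter_le _ _).trans (by simp)
    have hTB : (T : Set (Fin n → α)) ⊆ mostly (partitioned E) (B \ H) s := by
      intro y hy
      obtain ⟨hyH, hinj⟩ := Finset.mem_filter.1 hy
      exact mostly_anti (Finset.sdiff_subset.trans hBA) s
        (hB y hinj fun i => hHB (Fintype.mem_piFinset.1 hyH i))
    have hcardT : T.card * s < (B \ H).card := by
      have := Nat.mul_le_mul_right s hT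
      rw [Finset.card_sdiff_of_subset hHB]
      omega
    obtain ⟨a, ha, haT⟩ := exists_forall_of_subset_mostly hTB hcardT
    obtain ⟨haB, haH⟩ := Finset.mem_sdiff.1 ha
    refine ⟨insert a H, Finset.insert_subset haB hHB, Finset.card_insert_of_notMem haH, ?_⟩
    rw [Finset.coe_insert]
    exact hH.insert_vertex hE fun y hinj hy =>
      haT y (Finset.mem_filter.2 ⟨Fintype.mem_piFinset.2 hy, hinj⟩)

end Hypergraphs

/-! ### The finite Erdős–Hajnal property -/

/-- `C` is an Erdős–Hajnal exponent for symmetric `(n + 1)`-ary relations `E` such that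
`E(x₁; x₂, …, xₙ₊₁)` does not have the `k`-order property: every set of size `h ^ C` contains a
clique or an independent set of size `h`. -/
def IsErdosHajnalExponent.{u} (k n C : ℕ) : Prop :=
  ∀ ⦃α : Type u⦄ (E : Set (Fin (n + 1) → α)), PermInvariant E →
    ¬ HasOrderProperty (partitioned E) k → ∀ h ≥ 2, ∀ A : Finset α, h ^ C ≤ A.card →
      ∃ H ⊆ A, h ≤ H.card ∧ (IsClique E (H : Set α) ∨ IsClique Eᶜ (H : Set α))

theorem isErdosHajnalExponent_zero_two (k : ℕ) : IsErdosHajnalExponent k 0 2 := by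
  classical
  intro α E _ _ h hh A hA
  let p (a : α) : Prop := (fun _ : Fin 1 => a) ∈ E
  have hconst (x : Fin 1 → α) : (fun _ => x 0) = x := by
    funext i
    rw [Subsingleton.elim i 0]
  rcases le_or_gt h (A.filter p).card with hp | hp
  · refine ⟨A.filter p, Finset.filter_subset _ _, hp, Or.inl fun x _ hx => ?_⟩
    simpa [p, hconst] using (Finset.mem_filter.1 (hx 0)).2
  · refine ⟨A.filter (¬ p ·), Finset.filter_subset _ _, ?_, Or.inr fun x _ hx => ?_⟩
    · have := Finset.card_filter_add_card_filter_not (s := A) p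
      nlinarith
    · simpa [p, hconst] using (Finset.mem_filter.1 (hx 0)).2

namespace IsErdosHajnalExponent

theorem exists_of_isGood.{u} {k n C : ℕ} (hC : IsErdosHajnalExponent.{u} k n C) {α : Type u}
    {E : Set (Fin (n + 2) → α)} (hE : PermInvariant E)
    (hk : ¬ HasOrderProperty (partitioned E) k) {A : Finset α} {s t h : ℕ}
    (hA : IsGood (partitioned E) s A) (hks : k * k * s < A.card) (ht : 2 ≤ t)
    (htA : t ^ C ≤ A.card) (hht : h + h ^ (n + 1) * s ≤ t) :
    ∃ H ⊆ A, H.card = h ∧ (IsClique E (H : Set α) ∨ IsClique Eᶜ (H : Set α)) := by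
  obtain ⟨B, hBA, htB, hB⟩ :=
    hC _ (hE.mostly A s) (fun h => hk (h.of_mostly hE hA hks)) t ht A htA
  rcases hB with hB | hB
  · obtain ⟨H, hHB, hcard, hH⟩ := hB.exists_of_mostly hE hBA (hht.trans htB)
    exact ⟨H, hHB.trans hBA, hcard, Or.inl hH⟩
  · have hB' : IsClique (mostly (partitioned Eᶜ) A s) (B : Set α) :=
      hB.mono_left fun y hy => (hA y).resolve_left hy
    obtain ⟨H, hHB, hcard, hH⟩ := hB'.exists_of_mostly hE.compl hBA (hht.trans htB)
    exact ⟨H, hHB.trans hBA, hcard, Or.inr hH⟩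

theorem exists_succ.{u} {k n C : ℕ} (hC : IsErdosHajnalExponent.{u} k n C) :
    ∃ C', IsErdosHajnalExponent.{u} k (n + 1) C' := by
  let D := k * k + n + 2
  -- A good set of error `h ^ e i` is to have size at least `(h ^ (D + e i)) ^ (C + 1)`.
  let e (i : ℕ) : ℕ := (fun e => (D + e) * (C + 1))^[i] 0
  refine ⟨e (2 ^ (k + 1) - 2), fun α E hE hk h hh A hA => ?_⟩
  obtain ⟨i, A₀, hA₀, hcard, hgood⟩ := exists_isGood (fun i => h ^ e i) (by simp [e]) hA
    (fun htree => hk htree.hasOrderProperty)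
  have hcard : (h ^ (D + e i)) ^ (C + 1) ≤ A₀.card := by
    rwa [← pow_mul, ← Function.iterate_succ_apply' (fun e => (D + e) * (C + 1))]
  have hks : k * k * h ^ e i < h ^ (D + e i) := by
    rw [pow_add]
    have : k * k < h ^ D := (Nat.lt_pow_self hh).trans_le
      (Nat.pow_le_pow_right (by omega) (by omega))
    gcongr
  have ht : 2 ≤ h ^ (D + e i) := hh.trans (Nat.le_self_pow (by omega) h)
  have hht : h + h ^ (n + 1) * h ^ e i ≤ h ^ (D + e i) :=
    calc h + h ^ (n + 1) * h ^ e i = h + h ^ (n + 1 + e i) := by rw [pow_add h (n + 1)]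
      _ ≤ 2 * h ^ (n + 1 + e i) := by
        have := Nat.le_self_pow (n := n + 1 + e i) (by omega) h
        omega
      _ ≤ h * h ^ (n + 1 + e i) := by gcongr
      _ = h ^ (n + 1 + e i + 1) := by rw [pow_succ']
      _ ≤ h ^ (D + e i) := Nat.pow_le_pow_right (by omega) (by omega)
  obtain ⟨H, hHA₀, hH, hclique⟩ := hC.exists_of_isGood hE hk hgood
    (hks.trans_le ((Nat.le_self_pow (by omega) _).trans hcard)) ht
    ((Nat.pow_le_pow_right (by omega) (by omega)).trans hcard) hht
  exact ⟨H, hHA₀.trans hA₀, hH.ge, hclique⟩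

end IsErdosHajnalExponent

theorem exists_isErdosHajnalExponent.{u} (k n : ℕ) : ∃ C, IsErdosHajnalExponent.{u} k n C := by
  induction n with
  | zero => exact ⟨2, isErdosHajnalExponent_zero_two k⟩
  | succ n ih =>
    obtain ⟨C, hC⟩ := ih
    exact hC.exists_succ

theorem exists_pow_le_and_le_pow {C M : ℕ} (hC : C ≠ 0) (hM : 2 ^ C ≤ M) :
    ∃ h ≥ 2, h ^ C ≤ M ∧ M ≤ h ^ (2 * C) := by
  have hroot : 2 ≤ Nat.nthRoot C M := (Nat.le_nthRoot_iff hC).2 hM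
  refine ⟨Nat.nthRoot C M, hroot, (Nat.le_nthRoot_iff hC).1 le_rfl, ?_⟩
  calc M ≤ (Nat.nthRoot C M + 1) ^ C := (Nat.lt_pow_nthRoot_add_one hC M).le
    _ ≤ (Nat.nthRoot C M ^ 2) ^ C := Nat.pow_le_pow_left (by nlinarith) C
    _ = Nat.nthRoot C M ^ (2 * C) := (pow_mul _ _ _).symm

theorem exists_card_le_pow_card_isClique.{u} (k n : ℕ) :
    ∃ C, ∀ {α : Type u} {E : Set (Fin (n + 1) → α)}, PermInvariant E →
      ¬ HasOrderProperty (partitioned E) k → ∀ A : Finset α, 2 ^ C ≤ A.card →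
        ∃ H ⊆ A, A.card ≤ H.card ^ C ∧ (IsClique E (H : Set α) ∨ IsClique Eᶜ (H : Set α)) := by
  obtain ⟨C, hC⟩ := exists_isErdosHajnalExponent.{u} k n
  refine ⟨2 * (C + 1), fun {α E} hE hk A hA => ?_⟩
  obtain ⟨h, hh, hle, hge⟩ := exists_pow_le_and_le_pow C.succ_ne_zero
    ((Nat.pow_le_pow_right (by omega) (by omega)).trans hA)
  obtain ⟨H, hHA, hH, hclique⟩ := hC E hE hk h hh A
    ((Nat.pow_le_pow_right (by omega) (by omega)).trans hle)
  exact ⟨H, hHA, hge.trans (Nat.pow_le_pow_left hH _), hclique⟩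

/-! ### Transfer to ultraproducts -/

section Ultraproducts

variable {ι : Type*}

theorem extendTuple_eq_cons {V : Type*} {n : ℕ} (a : V) (b : Fin n → V) :
    extendTuple (n := n + 1) a b = Fin.cons a b := by
  funext i
  cases i using Fin.cases <;> simp [extendTuple]

theorem eventually_not_hasOrderProperty {𝓕 : Ultrafilter ι} {α β : ι → Type*}
    [∀ m, Nonempty (α m)] [∀ m, Nonempty (β m)] {R : ∀ m, α m → β m → Prop} {k : ℕ}
    (h : ¬ ∃ (a : Fin k → ∀ m, α m) (b : Fin k → ∀ m, β m),
      ∀ i j, (∀ᶠ m in 𝓕, R m (a i m) (b j m)) ↔ i ≤ j) :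
    ∀ᶠ m in 𝓕, ¬ HasOrderProperty (R m) k := by
  rw [Ultrafilter.eventually_not]
  intro hop
  obtain ⟨a, hb⟩ := Filter.skolem.1 hop
  obtain ⟨b, hab⟩ := Filter.skolem.1 hb
  refine h ⟨fun i m => a m i, fun j m => b m j, fun i j => ?_⟩
  exact (eventually_congr (hab.mono fun m hm => hm i j)).trans eventually_const

theorem eventually_mem_of_isClique {l : Filter ι} {V : ι → Type*} {n : ℕ}
    {E : ∀ m, Set (Fin n → V m)} {A : ∀ m, Set (V m)} (h : ∀ᶠ m in l, IsClique (E m) (A m))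
    {x : Fin n → ∀ m, V m} (hxA : ∀ t, ∀ᶠ m in l, x t m ∈ A m)
    (hx : ∀ t t', t ≠ t' → ∀ᶠ m in l, x t m ≠ x t' m) : ∀ᶠ m in l, (fun t => x t m) ∈ E m := by
  have hinj : ∀ᶠ m in l, ∀ t t', t ≠ t' → x t m ≠ x t' m := by
    simpa only [eventually_all, eventually_imp_distrib_left] using hx
  filter_upwards [h, hinj, eventually_all.2 hxA] with m hm hinj hmem
  exact hm _ (fun t t' => not_imp_not.1 (hinj t t')) hmem

theorem exists_pos_tendsto_log_card_div_log_card {𝓕 : Ultrafilter ι} {V : ι → Type*}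
    [∀ m, Fintype (V m)] {A : ∀ m, Finset (V m)} {C : ℕ}
    (hV : ∀ᶠ m in 𝓕, 1 < Fintype.card (V m))
    (hA : ∀ᶠ m in 𝓕, Fintype.card (V m) ≤ (A m).card ^ C) :
    ∃ l : ℝ, 0 < l ∧
      Tendsto (fun m => Real.log (A m).card / Real.log (Fintype.card (V m))) 𝓕 (nhds l) := by
  have hmem : ∀ᶠ m in 𝓕, Real.log (A m).card / Real.log (Fintype.card (V m)) ∈
      Set.Icc ((C : ℝ) + 1)⁻¹ 1 := by
    filter_upwards [hV, hA] with m hV hA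
    have hpos : 0 < Real.log (Fintype.card (V m)) := Real.log_pos (by exact_mod_cast hV)
    have hA₁ : 1 < (A m).card :=
      lt_of_pow_lt_pow_left₀ C (Nat.zero_le _) (by simpa using hV.trans_le hA)
    have hle : Real.log (A m).card ≤ Real.log (Fintype.card (V m)) :=
      Real.log_le_log (by positivity) (by exact_mod_cast (A m).card_le_univ)
    have hge : Real.log (Fintype.card (V m)) ≤ (C + 1) * Real.log (A m).card := by
      have hlog := Real.log_le_log (by positivity) (Nat.cast_le (α := ℝ).2 hA)
      rw [Nat.cast_pow, Real.log_pow] at hlog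
      linarith [Real.log_natCast_nonneg (A m).card]
    rw [Set.mem_Icc, inv_eq_one_div, div_le_div_iff₀ (by positivity) hpos, div_le_one hpos]
    exact ⟨by linarith, hle⟩
  obtain ⟨l, hl, hlim⟩ := isCompact_Icc.ultrafilter_le_nhds (𝓕.map _) (le_principal_iff.2 hmem)
  exact ⟨l, lt_of_lt_of_le (by positivity) hl.1, hlim⟩

end Ultraproducts

end ErdosHajnal

open ErdosHajnal in
theorem nonstandard_erdos_hajnal_hypergraphs_general {ι : Type*} (𝓕 : Ultrafilter ι)
    (V : ι → Type*) [∀ m, Fintype (V m)] [∀ m, Nonempty (V m)]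
    (hV : Tendsto (fun m => Fintype.card (V m)) 𝓕 atTop) {n : ℕ}
    (E : ∀ m, Set (Fin (n + 1) → V m)) (hsym : ∀ᶠ m in 𝓕, PermInvariant (E m))
    (hstable : ∃ k : ℕ, ¬ ∃ (a : Fin k → ∀ m, V m) (b : Fin k → Fin n → ∀ m, V m),
      ∀ i j, (∀ᶠ m in 𝓕, partitioned (E m) (a i m) (fun t => b j t m)) ↔ i ≤ j) :
    ∃ A : ∀ m, Set (V m),
      (∀ m, (A m).Nonempty) ∧
      (∃ l : ℝ, Tendsto (fun m => Real.log (A m).ncard / Real.log (Fintype.card (V m))) 𝓕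
        (nhds l) ∧ 0 < l) ∧
      ((∀ x : Fin (n + 1) → ∀ m, V m, (∀ t, ∀ᶠ m in 𝓕, x t m ∈ A m) →
          (∀ t t', t ≠ t' → ∀ᶠ m in 𝓕, x t m ≠ x t' m) →
          ∀ᶠ m in 𝓕, (fun t => x t m) ∈ E m) ∨
        (∀ x : Fin (n + 1) → ∀ m, V m, (∀ t, ∀ᶠ m in 𝓕, x t m ∈ A m) →
          (∀ t t', t ≠ t' → ∀ᶠ m in 𝓕, x t m ≠ x t' m) →
          ¬ ∀ᶠ m in 𝓕, (fun t => x t m) ∈ E m)) := by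
  obtain ⟨k, hk⟩ := hstable
  obtain ⟨C, hC⟩ := exists_card_le_pow_card_isClique k n
  have hfin : ∀ᶠ m in 𝓕, ¬ HasOrderProperty (partitioned (E m)) k :=
    eventually_not_hasOrderProperty fun ⟨a, b, hab⟩ =>
      hk ⟨a, fun j t m => b j m t, hab⟩
  have hlarge : ∀ᶠ m in 𝓕, ∃ A : {A : Finset (V m) // A.Nonempty},
      Fintype.card (V m) ≤ A.1.card ^ C ∧
        (IsClique (E m) (A.1 : Set (V m)) ∨
          IsClique (E m)ᶜ (A.1 : Set (V m))) := by
    filter_upwards [hsym, hfin, hV.eventually_gt_atTop 1, hV.eventually_ge_atTop (2 ^ C)]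
      with m hsym hfin hV hcard
    obtain ⟨A, -, hA, hclique⟩ := hC hsym hfin Finset.univ hcard
    have hA₁ : 1 < A.card :=
      lt_of_pow_lt_pow_left₀ C (Nat.zero_le _) (by simpa using hV.trans_le hA)
    exact ⟨⟨A, Finset.card_pos.1 (by omega)⟩, hA, hclique⟩
  have (m : ι) : Nonempty {A : Finset (V m) // A.Nonempty} := ⟨_, Finset.univ_nonempty⟩
  obtain ⟨A, hA⟩ := Filter.skolem.1 hlarge
  obtain ⟨l, hl, hlim⟩ := exists_pos_tendsto_log_card_div_log_card
    (hV.eventually_gt_atTop 1) (hA.mono fun _ => And.left)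
  refine ⟨fun m => (A m).1, fun m => (A m).2, ⟨l, by simpa using hlim, hl⟩, ?_⟩
  rcases Ultrafilter.eventually_or.1 (hA.mono fun _ => And.right) with h | h
  · exact Or.inl fun x => eventually_mem_of_isClique h
  · exact Or.inr fun x hxA hx =>
      Ultrafilter.eventually_not.1 (eventually_mem_of_isClique h hxA hx)

/-- **Nonstandard Erdős–Hajnal for stable pseudo-finite hypergraphs.**
If the partitioned relation `E(x₁; x₂, …, xₙ)` is stable on the ultraproduct, then
there are nonempty subsets `A m ⊆ V m` with `δ(A) > 0` whose ultraproduct is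
`E`-homogeneous. -/
theorem nonstandard_erdos_hajnal_hypergraphs
    (𝓕 : Ultrafilter ℕ) (h𝓕 : ∀ s : Set ℕ, s.Finite → s ∉ 𝓕)
    (V : ℕ → Type) [∀ m, Fintype (V m)] [∀ m, Nonempty (V m)]
    (hV : Tendsto (fun m => Fintype.card (V m)) (𝓕 : Filter ℕ) atTop)
    (n : ℕ) (hn : 2 ≤ n)
    (E : ∀ m, Set (Fin n → V m))
    (hsym : ∀ m (σ : Equiv.Perm (Fin n)) (x : Fin n → V m), x ∈ E m → x ∘ σ ∈ E m)
    (hstable : ∃ k : ℕ, ¬ ∃ (a : Fin k → ∀ m, V m) (b : Fin k → Fin (n - 1) → ∀ m, V m),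
        ∀ i j, ({m | extendTuple (a i m) (fun t => b j t m) ∈ E m} ∈ 𝓕 ↔ i ≤ j)) :
    ∃ A : ∀ m, Set (V m),
      (∀ m, (A m).Nonempty) ∧
      (∃ l : ℝ, hasDim 𝓕 A l ∧ 0 < l) ∧
      ((∀ x : Fin n → ∀ m, V m, (∀ t, {m | x t m ∈ A m} ∈ 𝓕) →
          (∀ t t', t ≠ t' → {m | x t m ≠ x t' m} ∈ 𝓕) →
          {m | (fun t => x t m) ∈ E m} ∈ 𝓕) ∨
       (∀ x : Fin n → ∀ m, V m, (∀ t, {m | x t m ∈ A m} ∈ 𝓕) →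
          (∀ t t', t ≠ t' → {m | x t m ≠ x t' m} ∈ 𝓕) →
          {m | (fun t => x t m) ∈ E m} ∉ 𝓕)) := by
  obtain ⟨N, rfl⟩ : ∃ N, n = N + 1 := ⟨n - 1, by omega⟩
  simp only [ErdosHajnal.extendTuple_eq_cons] at hstable
  exact nonstandard_erdos_hajnal_hypergraphs_general 𝓕 V hV E (.of_forall hsym) hstable
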